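/- Let A = (A_1,…,A_n) be a nonnegative vector in ℝ^n and D = n + A_1 + ⋯ + A_n. Then for every continuously differentiable function f : ℝ^n → ℝ with compact support, ( ∫_{ℝ^n_A} |f|^2 x^A dx )^{1 + 2/D} ≤ (2/(Π(A) e D)) · ( ∫_{ℝ^n_A} |∇f|^2 x^A dx ) · ( ∫_{ℝ^n_A} |f| x^A dx )^{4/D}. -/

import Mathlib

open MeasureTheory Real Filter

noncomputable section

/-- The positivity region `ℝ^n_A = {x : x_i > 0 whenever A_i > 0}`. -/
def monSet {ι : Type*} [Fintype ι] (A : ι → ℝ) : Set (EuclideanSpace ℝ ι) :=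
  {x | ∀ i, 0 < A i → 0 < x i}

/-- The monomial weight `x^A = ∏ |x_i|^{A_i}`. -/
def monWeight {ι : Type*} [Fintype ι] (A : ι → ℝ) (x : EuclideanSpace ℝ ι) : ℝ :=
  ∏ i, |x i| ^ A i

/-- The homogeneous dimension `D = n + A_1 + ⋯ + A_n`. -/
def monDim {ι : Type*} [Fintype ι] (A : ι → ℝ) : ℝ :=
  (Fintype.card ι : ℝ) + ∑ i, A i

/-- `k = #{i : A_i > 0}`. -/
def monK {ι : Type*} [Fintype ι] (A : ι → ℝ) : ℕ :=
  Nat.card {i : ι // 0 < A i}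

/-- `Π(A) = [ (∏ Γ((A_i+1)/2)) / 2^k ]^{2/D}`. -/
def monPi {ι : Type*} [Fintype ι] (A : ι → ℝ) : ℝ :=
  ((∏ i, Gamma ((A i + 1) / 2)) / 2 ^ monK A) ^ (2 / monDim A)

/-!
For a density `v` on the line or half-line, let `T` be the monotone rearrangement of a multiple of
`v |x| ^ a` onto the Gaussian `exp (-b x²) |x| ^ a`. Taking logarithms in the mass balance satisfied
by the derivative of `T`, estimating with `log t ≤ t - 1`, and integrating the derivative of
`v |x| ^ a T` yields a one-dimensional logarithmic Sobolev inequality with a free parameter `b` and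
the mass of the Gaussian as its constant. Entropy is subadditive over products, so the inequality
tensorises to `x ^ A dx`. The Gibbs inequality for `f²` against `|f|` bounds the entropy of `f²`
below by `X log X - 2 X log N`, where `X = ∫ f²` and `N = ∫ |f|`; the optimal `b` then gives the
Nash inequality with the stated constant.
-/

open scoped Topology

/-- The coordinate domain of the weight `|x| ^ a`: the factors of `monSet A` are
`halfLine (A i)`. -/
def halfLine (a : ℝ) : Set ℝ := {x | 0 < a → 0 < x}

lemma halfLine_of_pos {a : ℝ} (ha : 0 < a) : halfLine a = Set.Ioi 0 := by
  ext x; simp [halfLine, ha]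

lemma halfLine_of_nonpos {a : ℝ} (ha : a ≤ 0) : halfLine a = Set.univ := by
  ext x; simp [halfLine, ha.not_gt]

lemma isOpen_halfLine (a : ℝ) : IsOpen (halfLine a) := by
  by_cases ha : 0 < a
  · exact halfLine_of_pos ha ▸ isOpen_Ioi
  · exact halfLine_of_nonpos (not_lt.1 ha) ▸ isOpen_univ

lemma measurableSet_halfLine (a : ℝ) : MeasurableSet (halfLine a) :=
  (isOpen_halfLine a).measurableSet

lemma ordConnected_halfLine (a : ℝ) : (halfLine a).OrdConnected :=
  ⟨fun _ hx _ _ _ hz ha => (hx ha).trans_le hz.1⟩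

section Transport

/-- The distribution function of the density `p` on `J`. -/
def distFun (J : Set ℝ) (p : ℝ → ℝ) (x : ℝ) : ℝ := ∫ t in Set.Iic x, J.indicator p t

variable {J : Set ℝ} {p q : ℝ → ℝ}

lemma distFun_eq_add (hJ : MeasurableSet J) (hi : IntegrableOn p J) (x : ℝ) :
    distFun J p x = distFun J p 0 + ∫ t in (0 : ℝ)..x, J.indicator p t := by
  have hI := (integrable_indicator_iff hJ).2 hi
  exact eq_add_of_sub_eq' (intervalIntegral.integral_Iic_sub_Iic hI.integrableOn hI.integrableOn)

lemma continuous_distFun (hJ : MeasurableSet J) (hi : IntegrableOn p J) :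
    Continuous (distFun J p) := by
  have hI := (integrable_indicator_iff hJ).2 hi
  rw [funext (distFun_eq_add hJ hi)]
  exact continuous_const.add
    (intervalIntegral.continuous_primitive (fun _ _ => hI.intervalIntegrable) 0)

lemma tendsto_distFun_atBot : Tendsto (distFun J p) atBot (𝓝 0) :=
  tendsto_integral_Iic_zero (a := id) tendsto_id

lemma tendsto_distFun_atTop (hJ : MeasurableSet J) (hi : IntegrableOn p J) :
    Tendsto (distFun J p) atTop (𝓝 (∫ x in J, p x)) := by
  rw [← integral_indicator hJ]
  exact (aecover_Iic tendsto_id).integral_tendsto_of_countably_generated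
    ((integrable_indicator_iff hJ).2 hi)

lemma hasDerivAt_distFun (hJ : IsOpen J) (hi : IntegrableOn p J) (hc : ContinuousOn p J) {x : ℝ}
    (hx : x ∈ J) : HasDerivAt (distFun J p) (p x) x := by
  have hI := (integrable_indicator_iff hJ.measurableSet).2 hi
  have hev : J.indicator p =ᶠ[𝓝 x] p := by
    filter_upwards [hJ.mem_nhds hx] with y hy using Set.indicator_of_mem hy p
  have hderiv := intervalIntegral.integral_hasDerivAt_right (a := 0) (b := x)
    hI.intervalIntegrable hI.aestronglyMeasurable.stronglyMeasurableAtFilter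
    ((hc.continuousAt (hJ.mem_nhds hx)).congr hev.symm)
  rw [hev.self_of_nhds] at hderiv
  rw [funext (distFun_eq_add hJ.measurableSet hi)]
  exact hderiv.const_add _

lemma strictMonoOn_distFun (hJ : IsOpen J) (hJc : J.OrdConnected) (hi : IntegrableOn p J)
    (hc : ContinuousOn p J) (hp : ∀ x ∈ J, 0 < p x) : StrictMonoOn (distFun J p) J := by
  refine strictMonoOn_of_deriv_pos hJc.convex
    (continuous_distFun hJ.measurableSet hi).continuousOn fun x hx => ?_
  have hxJ := interior_subset hx
  rw [(hasDerivAt_distFun hJ hi hc hxJ).deriv]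
  exact hp x hxJ

lemma mapsTo_distFun (hJ : IsOpen J) (hJc : J.OrdConnected) (hi : IntegrableOn p J)
    (hc : ContinuousOn p J) (hp : ∀ x ∈ J, 0 < p x) :
    Set.MapsTo (distFun J p) J (Set.Ioo 0 (∫ x in J, p x)) := by
  intro x hx
  have hI := (integrable_indicator_iff hJ.measurableSet).2 hi
  have hmono := strictMonoOn_distFun hJ hJc hi hc hp
  have h0 (t : ℝ) : 0 ≤ J.indicator p t := Set.indicator_nonneg (fun t ht => (hp t ht).le) t
  obtain ⟨l, r, hlr, hsub⟩ := (mem_nhds_iff_exists_Ioo_subset (a := x)).1 (hJ.mem_nhds hx)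
  obtain ⟨y, hly, hyx⟩ := exists_between hlr.1
  obtain ⟨z, hxz, hzr⟩ := exists_between hlr.2
  constructor
  · calc 0 ≤ distFun J p y := integral_nonneg h0
      _ < distFun J p x := hmono (hsub ⟨hly, hyx.trans hlr.2⟩) hx hyx
  · calc distFun J p x < distFun J p z := hmono hx (hsub ⟨hlr.1.trans hxz, hzr⟩) hxz
      _ ≤ ∫ t, J.indicator p t := setIntegral_le_integral hI (Eventually.of_forall h0)
      _ = ∫ t in J, p t := integral_indicator hJ.measurableSet

lemma distFun_of_notMem (hJ : MeasurableSet J) (hJc : J.OrdConnected) {x : ℝ} (hx : x ∉ J) :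
    distFun J p x = 0 ∨ distFun J p x = ∫ t in J, p t := by
  rw [distFun, setIntegral_indicator hJ]
  by_cases h : ∃ y ∈ J, y ≤ x
  · obtain ⟨y, hy, hyx⟩ := h
    have hJx : J ⊆ Set.Iic x := fun z hz =>
      not_lt.1 fun hxz => hx (hJc.out hy hz ⟨hyx, hxz.le⟩)
    exact Or.inr (by rw [Set.inter_eq_right.2 hJx])
  · have hempty : Set.Iic x ∩ J = ∅ :=
      Set.eq_empty_of_forall_notMem fun y hy => h ⟨y, hy.2, hy.1⟩
    exact Or.inl (by simp [hempty])

lemma surjOn_distFun (hJ : MeasurableSet J) (hJc : J.OrdConnected) (hi : IntegrableOn p J) :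
    Set.SurjOn (distFun J p) J (Set.Ioo 0 (∫ x in J, p x)) := by
  rintro v ⟨hv0, hv1⟩
  obtain ⟨x, rfl⟩ := mem_range_of_exists_le_of_exists_ge (continuous_distFun hJ hi)
    ((tendsto_distFun_atBot.eventually_lt_const hv0).exists.imp fun _ => le_of_lt)
    (((tendsto_distFun_atTop hJ hi).eventually_const_lt hv1).exists.imp fun _ => le_of_lt)
  refine ⟨x, ?_, rfl⟩
  by_contra hx
  rcases distFun_of_notMem (p := p) hJ hJc hx with h | h
  · exact hv0.ne' h
  · exact hv1.ne h

/-- A differentiable injection of `J` into itself pushing the density `q` to the density `p`. -/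
structure IsTransport (J : Set ℝ) (q p T : ℝ → ℝ) : Prop where
  mapsTo : Set.MapsTo T J J
  injOn : Set.InjOn T J
  hasDerivAt : ∀ x ∈ J, HasDerivAt T (q x / p (T x)) x

/-- `T` is the monotone rearrangement, which matches the distribution functions of `q` and `p`. -/
lemma exists_isTransport (hJ : IsOpen J) (hJc : J.OrdConnected)
    (hpi : IntegrableOn p J) (hpc : ContinuousOn p J) (hp : ∀ x ∈ J, 0 < p x)
    (hqi : IntegrableOn q J) (hqc : ContinuousOn q J) (hq : ∀ x ∈ J, 0 < q x)
    (hqp : ∫ x in J, q x = ∫ x in J, p x) : ∃ T, IsTransport J q p T := by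
  have hmono := strictMonoOn_distFun hJ hJc hpi hpc hp
  have hbij : Set.BijOn (distFun J p) J (Set.Ioo 0 (∫ x in J, p x)) :=
    ⟨mapsTo_distFun hJ hJc hpi hpc hp, hmono.injOn, surjOn_distFun hJ.measurableSet hJc hpi⟩
  let S := Function.invFunOn (distFun J p) J
  have hinv : Set.InvOn S (distFun J p) J (Set.Ioo 0 (∫ x in J, p x)) := hbij.invOn_invFunOn
  have hS : Set.BijOn S (Set.Ioo 0 (∫ x in J, p x)) J := hbij.symm hinv.symm
  have hSmono : StrictMonoOn S (Set.Ioo 0 (∫ x in J, p x)) := fun v hv w hw hvw => by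
    rwa [← hmono.lt_iff_lt (hS.mapsTo hv) (hS.mapsTo hw), hinv.2 hv, hinv.2 hw]
  have hSderiv : ∀ v ∈ Set.Ioo 0 (∫ x in J, p x), HasDerivAt S (p (S v))⁻¹ v := fun v hv => by
    have hnhds := Ioo_mem_nhds hv.1 hv.2
    refine HasDerivAt.of_local_left_inverse ?_
      (hasDerivAt_distFun hJ hpi hpc (hS.mapsTo hv)) (hp _ (hS.mapsTo hv)).ne'
      (by filter_upwards [hnhds] with w hw using hinv.2 hw)
    exact hSmono.continuousAt_of_image_mem_nhds hnhds
      (by rw [hS.image_eq]; exact hJ.mem_nhds (hS.mapsTo hv))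
  have hq_maps := mapsTo_distFun hJ hJc hqi hqc hq
  rw [hqp] at hq_maps
  refine ⟨S ∘ distFun J q, hS.mapsTo.comp hq_maps,
    hS.injOn.comp (strictMonoOn_distFun hJ hJc hqi hqc hq).injOn hq_maps, fun x hx => ?_⟩
  rw [div_eq_inv_mul]
  exact (hSderiv _ (hq_maps hx)).comp x (hasDerivAt_distFun hJ hqi hqc hx)

lemma IsTransport.integrableOn_mul_comp {T G : ℝ → ℝ} (hT : IsTransport J q p T)
    (hJ : MeasurableSet J) (hp : ∀ x ∈ J, 0 < p x) (hq : ∀ x ∈ J, 0 < q x)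
    (hG : IntegrableOn (fun x => p x * G x) J) : IntegrableOn (fun x => q x * G (T x)) J := by
  refine ((integrableOn_image_iff_integrableOn_abs_deriv_smul hJ
    (fun x hx => (hT.hasDerivAt x hx).hasDerivWithinAt) hT.injOn _).1
    (hG.mono_set hT.mapsTo.image_subset)).congr_fun (fun x hx => ?_) hJ
  have hpx := hp _ (hT.mapsTo hx)
  have hqx := hq x hx
  simp only [smul_eq_mul]
  rw [abs_of_pos (div_pos hqx hpx)]
  field_simp

end Transport

section IntegrationByParts

variable {B B' R : ℝ → ℝ}

lemma not_integrableOn_Ioi_of_eventually_ge {α c : ℝ} (hc : 0 < c) (hB : ∀ᶠ x in atTop, c ≤ B x) :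
    ¬ IntegrableOn B (Set.Ioi α) := by
  intro hi
  obtain ⟨K, hK⟩ := eventually_atTop.1 hB
  have hconst : IntegrableOn (fun _ : ℝ => c) (Set.Ioi (max α K)) := by
    refine Integrable.mono' (hi.mono_set (Set.Ioi_subset_Ioi (le_max_left α K)))
      aestronglyMeasurable_const ?_
    filter_upwards [ae_restrict_mem measurableSet_Ioi] with x hx
    rw [norm_of_nonneg hc.le]
    exact hK x ((le_max_right α K).trans (le_of_lt hx))
  simp [integrableOn_const_iff, hc.ne'] at hconst

lemma le_setIntegral_Ioi_of_hasDerivAt {α : ℝ} (hB : ∀ x ∈ Set.Ici α, HasDerivAt B (B' x) x)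
    (hBR : ∀ x ∈ Set.Ioi α, 0 ≤ B' x + R x) (hBi : IntegrableOn B (Set.Ioi α))
    (hRi : IntegrableOn R (Set.Ioi α)) : B α ≤ ∫ x in Set.Ioi α, R x := by
  by_contra! hlt
  have hB_ge : ∀ β ≥ α, B α - ∫ x in α..β, R x ≤ B β := fun β hαβ => by
    have h := intervalIntegral.sub_le_integral_of_hasDeriv_right_of_le (g := fun x => -B x)
      (g' := fun x => -B' x) (φ := R) hαβ
      (fun x hx => (hB x hx.1).neg.continuousAt.continuousWithinAt)
      (fun x hx => (hB x hx.1.le).neg.hasDerivWithinAt)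
      ((integrableOn_Icc_iff_integrableOn_Ioc (by simp)).2 (hRi.mono_set Set.Ioc_subset_Ioi_self))
      (fun x hx => by linarith [hBR x hx.1])
    linarith
  have hlim : Tendsto (fun β => ∫ x in α..β, R x) atTop (𝓝 (∫ x in Set.Ioi α, R x)) :=
    intervalIntegral_tendsto_integral_Ioi α hRi tendsto_id
  refine not_integrableOn_Ioi_of_eventually_ge (half_pos (sub_pos.2 hlt)) ?_ hBi
  filter_upwards [hlim.eventually_le_const (left_lt_add_div_two.2 hlt), eventually_ge_atTop α]
    with β hβ hαβ
  linarith [hB_ge β hαβ]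

lemma integral_nonneg_of_hasDerivAt (hB : ∀ x, HasDerivAt B (B' x) x) (hBR : ∀ x, 0 ≤ B' x + R x)
    (hBi : Integrable B) (hRi : Integrable R) : 0 ≤ ∫ x, R x := by
  have hright : B 0 ≤ ∫ x in Set.Ioi 0, R x :=
    le_setIntegral_Ioi_of_hasDerivAt (fun x _ => hB x) (fun x _ => hBR x) hBi.integrableOn
      hRi.integrableOn
  have hleft : -B (-0) ≤ ∫ x in Set.Ioi 0, R (-x) :=
    le_setIntegral_Ioi_of_hasDerivAt (B := fun x => -B (-x)) (B' := fun x => B' (-x))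
      (fun x _ => by simpa using ((hB (-x)).scomp x (hasDerivAt_neg x)).fun_neg)
      (fun x _ => hBR (-x)) hBi.comp_neg.neg.integrableOn hRi.comp_neg.integrableOn
  rw [integral_comp_neg_Ioi, neg_zero] at hleft
  rw [← intervalIntegral.integral_Iic_add_Ioi (b := 0) hRi.integrableOn hRi.integrableOn]
  linarith

lemma setIntegral_Ioi_nonneg_of_hasDerivAt {c : ℝ} (hB : ∀ x ∈ Set.Ioi c, HasDerivAt B (B' x) x)
    (hBR : ∀ x ∈ Set.Ioi c, 0 ≤ B' x + R x) (hB0 : ∀ x ∈ Set.Ioi c, 0 ≤ B x)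
    (hBi : IntegrableOn B (Set.Ioi c)) (hRi : IntegrableOn R (Set.Ioi c)) :
    0 ≤ ∫ x in Set.Ioi c, R x := by
  have hlim : Tendsto (fun α => ∫ x in Set.Ioi α, R x) (𝓝[>] c) (𝓝 (∫ x in Set.Ioi c, R x)) := by
    have hcover := aecover_Ioi_of_Ioi (μ := volume) (A := c)
      (tendsto_nhdsWithin_of_tendsto_nhds tendsto_id : Tendsto (fun α => α) (𝓝[>] c) (𝓝 c))
    refine (hcover.integral_tendsto_of_countably_generated hRi).congr' ?_
    filter_upwards [self_mem_nhdsWithin] with α hα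
    rw [Measure.restrict_restrict measurableSet_Ioi,
      Set.inter_eq_left.2 (Set.Ioi_subset_Ioi (le_of_lt hα))]
  refine ge_of_tendsto hlim ?_
  filter_upwards [self_mem_nhdsWithin] with α hα
  have hsub : Set.Ici α ⊆ Set.Ioi c := Set.Ici_subset_Ioi.2 hα
  have hsub' := Set.Ioi_subset_Ici_self.trans hsub
  exact (hB0 α hα).trans (le_setIntegral_Ioi_of_hasDerivAt (fun x hx => hB x (hsub hx))
    (fun x hx => hBR x (hsub' hx)) (hBi.mono_set hsub') (hRi.mono_set hsub'))

lemma setIntegral_halfLine_nonneg_of_hasDerivAt {a : ℝ}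
    (hB : ∀ x ∈ halfLine a, HasDerivAt B (B' x) x) (hBR : ∀ x ∈ halfLine a, 0 ≤ B' x + R x)
    (hB0 : 0 < a → ∀ x ∈ halfLine a, 0 ≤ B x) (hBi : IntegrableOn B (halfLine a))
    (hRi : IntegrableOn R (halfLine a)) : 0 ≤ ∫ x in halfLine a, R x := by
  by_cases ha : 0 < a
  · rw [halfLine_of_pos ha] at *
    exact setIntegral_Ioi_nonneg_of_hasDerivAt hB hBR (hB0 ha) hBi hRi
  · simp only [halfLine_of_nonpos (not_lt.1 ha), Set.mem_univ, forall_const, integrableOn_univ,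
      Measure.restrict_univ] at *
    exact integral_nonneg_of_hasDerivAt hB hBR hBi hRi

end IntegrationByParts

/-- The one-dimensional factor of the measure `x^A dx`: the measure `|x|^a dx` on `halfLine a`. -/
def monMeas (a : ℝ) : Measure ℝ :=
  (volume.restrict (halfLine a)).withDensity fun x => ENNReal.ofReal (|x| ^ a)

/-- The mass of the Gaussian `exp (-b x²)` for the measure `|x|^a dx` on `halfLine a`. -/
def gaussMass (a b : ℝ) : ℝ := ∫ x, exp (-b * x ^ 2) ∂monMeas a

section MonomialMeasure

variable {a b : ℝ}

lemma continuous_abs_rpow (ha : 0 ≤ a) : Continuous fun x : ℝ => |x| ^ a :=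
  continuous_abs.rpow_const fun _ => Or.inr ha

lemma abs_rpow_of_mem_halfLine (ha : 0 ≤ a) {x : ℝ} (hx : x ∈ halfLine a) : |x| ^ a = x ^ a := by
  rcases ha.eq_or_lt with rfl | ha
  · simp
  · rw [abs_of_pos (hx ha)]

lemma abs_rpow_pos_of_mem_halfLine (ha : 0 ≤ a) {x : ℝ} (hx : x ∈ halfLine a) : 0 < |x| ^ a := by
  rcases ha.eq_or_lt with rfl | ha
  · simp
  · exact rpow_pos_of_pos (abs_pos.2 (hx ha).ne') _

lemma hasDerivAt_abs_rpow_of_mem_halfLine (ha : 0 ≤ a) {x : ℝ} (hx : x ∈ halfLine a) :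
    HasDerivAt (fun x => |x| ^ a) (a * |x| ^ a / x) x := by
  rcases ha.eq_or_lt with rfl | ha
  · simpa using hasDerivAt_const x (1 : ℝ)
  · have hx0 := hx ha
    have hderiv := hasDerivAt_rpow_const (x := x) (p := a) (Or.inl hx0.ne')
    rw [rpow_sub_one hx0.ne', ← mul_div_assoc] at hderiv
    rw [abs_of_pos hx0]
    refine hderiv.congr_of_eventuallyEq ?_
    filter_upwards [lt_mem_nhds hx0] with y hy
    rw [abs_of_pos hy]

lemma integral_monMeas (a : ℝ) (F : ℝ → ℝ) :
    ∫ x, F x ∂monMeas a = ∫ x in halfLine a, F x * |x| ^ a := by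
  rw [monMeas, integral_withDensity_eq_integral_toReal_smul (by fun_prop)
    (Eventually.of_forall fun _ => ENNReal.ofReal_lt_top)]
  refine integral_congr_ae (Eventually.of_forall fun x => ?_)
  simp only [ENNReal.toReal_ofReal (rpow_nonneg (abs_nonneg x) a), smul_eq_mul, mul_comm]

lemma integrable_monMeas {F : ℝ → ℝ} :
    Integrable F (monMeas a) ↔ IntegrableOn (fun x => F x * |x| ^ a) (halfLine a) := by
  rw [monMeas, integrable_withDensity_iff_integrable_smul' (by fun_prop)
    (Eventually.of_forall fun _ => ENNReal.ofReal_lt_top)]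
  refine integrable_congr (Eventually.of_forall fun x => ?_)
  simp only [ENNReal.toReal_ofReal (rpow_nonneg (abs_nonneg x) a), smul_eq_mul, mul_comm]

lemma isLocallyFiniteMeasure_monMeas (ha : 0 ≤ a) : IsLocallyFiniteMeasure (monMeas a) :=
  IsLocallyFiniteMeasure.withDensity_ofReal (continuous_abs_rpow ha)

lemma integrable_exp_monMeas (ha : 0 ≤ a) (hb : 0 < b) :
    Integrable (fun x => exp (-b * x ^ 2)) (monMeas a) := by
  refine integrable_monMeas.2 <| (integrable_rpow_mul_exp_neg_mul_sq hb
    (by linarith : -1 < a)).integrableOn.congr_fun (fun x hx => ?_) (measurableSet_halfLine a)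
  rw [abs_rpow_of_mem_halfLine ha hx, mul_comm]

lemma integrable_sq_mul_exp_monMeas (ha : 0 ≤ a) (hb : 0 < b) :
    Integrable (fun x => x ^ 2 * exp (-b * x ^ 2)) (monMeas a) := by
  refine integrable_monMeas.2 <| (integrable_rpow_mul_exp_neg_mul_sq hb
    (by linarith : -1 < a + 2)).integrableOn.congr_fun (fun x hx => ?_) (measurableSet_halfLine a)
  rw [abs_rpow_of_mem_halfLine ha hx]
  rcases ha.eq_or_lt with rfl | ha
  · simp
  · simp only [rpow_add (hx ha), rpow_two]
    ring

lemma integrable_mul_exp_monMeas (ha : 0 ≤ a) (hb : 0 < b) :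
    Integrable (fun x => x * exp (-b * x ^ 2)) (monMeas a) := by
  refine ((integrable_exp_monMeas ha hb).add (integrable_sq_mul_exp_monMeas ha hb)).mono'
    (by fun_prop) (Eventually.of_forall fun x => ?_)
  rw [norm_mul, Real.norm_eq_abs, norm_of_nonneg (exp_pos _).le]
  simp only [Pi.add_apply]
  nlinarith [exp_pos (-b * x ^ 2), sq_nonneg (|x| - 1), sq_abs x, abs_nonneg x]

lemma gaussMass_eq (ha : 0 ≤ a) (hb : 0 < b) :
    gaussMass a b = b ^ (-(a + 1) / 2) * (Gamma ((a + 1) / 2) / if 0 < a then 2 else 1) := by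
  rw [gaussMass, integral_monMeas]
  rcases ha.eq_or_lt with rfl | ha
  · simp only [halfLine_of_nonpos le_rfl, rpow_zero, mul_one, Measure.restrict_univ,
      integral_gaussian, lt_irrefl, if_false, zero_add, Gamma_one_half_eq, div_one]
    rw [div_eq_mul_inv, sqrt_mul pi_pos.le, sqrt_inv, sqrt_eq_rpow b, ← rpow_neg hb.le, neg_div,
      mul_comm]
  · have hcongr : Set.EqOn (fun x => exp (-b * x ^ 2) * |x| ^ a)
        (fun x => x ^ a * exp (-b * x ^ (2 : ℝ))) (Set.Ioi 0) := fun x hx => by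
      simp only [abs_of_pos (Set.mem_Ioi.1 hx), rpow_two, mul_comm]
    rw [halfLine_of_pos ha, setIntegral_congr_fun measurableSet_Ioi hcongr,
      integral_rpow_mul_exp_neg_mul_rpow two_pos (by linarith) hb, if_pos ha]
    ring_nf

lemma gaussMass_pos (ha : 0 ≤ a) (hb : 0 < b) : 0 < gaussMass a b := by
  rw [gaussMass_eq ha hb]
  exact mul_pos (rpow_pos_of_pos hb _)
    (div_pos (Gamma_pos_of_pos (by linarith)) (by split_ifs <;> norm_num))

lemma prod_gaussMass {ι : Type*} [Fintype ι] {A : ι → ℝ} (hA : ∀ i, 0 ≤ A i) (hb : 0 < b) :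
    ∏ i, gaussMass (A i) b =
      b ^ (-(monDim A / 2)) * ((∏ i, Gamma ((A i + 1) / 2)) / 2 ^ monK A) := by
  have hk : (2 : ℝ) ^ monK A = ∏ i, if 0 < A i then (2 : ℝ) else 1 := by
    rw [Finset.prod_ite, Finset.prod_const, Finset.prod_const_one, mul_one, monK,
      Nat.card_eq_fintype_card, Fintype.card_subtype]
  have hD : -(monDim A / 2) = ∑ i, (-(A i + 1) / 2) := by
    rw [← Finset.sum_div, Finset.sum_neg_distrib, Finset.sum_add_distrib, monDim]
    simp; ring
  simp only [gaussMass_eq (hA _) hb, Finset.prod_mul_distrib, Finset.prod_div_distrib, hk, hD,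
    rpow_sum_of_pos hb]

end MonomialMeasure

/-- The entropy functional of a density `h`, not normalised to have mass one. -/
def ent {X : Type*} [MeasurableSpace X] (μ : Measure X) (h : X → ℝ) : ℝ :=
  ∫ x, h x * log (h x) ∂μ - (∫ x, h x ∂μ) * log (∫ x, h x ∂μ)

section CompactSupport

variable {X : Type*} [TopologicalSpace X] {g h : X → ℝ}

lemma hasCompactSupport_sq (hs : HasCompactSupport g) : HasCompactSupport fun x => g x ^ 2 :=
  hs.comp_left (g := fun t : ℝ => t ^ 2) (zero_pow two_ne_zero)

variable [MeasurableSpace X] [OpensMeasurableSpace X] {μ : Measure X} [IsFiniteMeasureOnCompacts μ]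

lemma integrable_sq_of_hasCompactSupport (hg : Continuous g) (hs : HasCompactSupport g) :
    Integrable (fun x => g x ^ 2) μ :=
  (hg.pow 2).integrable_of_hasCompactSupport (hasCompactSupport_sq hs)

lemma integrable_mul_log_of_hasCompactSupport (hg : Continuous g) (hs : HasCompactSupport g) :
    Integrable (fun x => g x * log (g x)) μ :=
  (continuous_mul_log.comp hg).integrable_of_hasCompactSupport
    (hs.comp_left (g := fun t : ℝ => t * log t) (zero_mul _))

lemma integrable_add_mul_log_of_hasCompactSupport (hg : Continuous g) (hs : HasCompactSupport g)
    (hh : Continuous h) (hhi : Integrable (fun x => h x * log (h x)) μ) :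
    Integrable (fun x => (g x + h x) * log (g x + h x)) μ := by
  have hdiff : Integrable (fun x => (g x + h x) * log (g x + h x) - h x * log (h x)) μ := by
    refine ((continuous_mul_log.comp (hg.add hh)).sub
      (continuous_mul_log.comp hh)).integrable_of_hasCompactSupport (hs.mono' fun x hx => ?_)
    refine subset_tsupport _ fun hgx => hx ?_
    simp [hgx]
  exact (hdiff.add hhi).congr (Eventually.of_forall fun x => by simp)

end CompactSupport

section LogSobolevLine

variable {a b : ℝ}

lemma log_abs_rpow_sub_le (ha : 0 ≤ a) {x y : ℝ} (hx : x ∈ halfLine a) (hy : y ∈ halfLine a) :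
    log (|y| ^ a) - log (|x| ^ a) ≤ a / x * y - a := by
  rcases ha.eq_or_lt with rfl | ha
  · simp
  have hx0 := hx ha
  have hy0 := hy ha
  calc log (|y| ^ a) - log (|x| ^ a) = a * log (y / x) := by
        rw [abs_of_pos hy0, abs_of_pos hx0, log_rpow hy0, log_rpow hx0, log_div hy0.ne' hx0.ne']
        ring
    _ ≤ a * (y / x - 1) := by gcongr; exact log_le_sub_one_of_pos (div_pos hy0 hx0)
    _ = a / x * y - a := by ring

lemma quadratic_nonneg_of_sq_le {b T v v' I : ℝ} (hb : 0 < b) (hv : 0 < v)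
    (hI : v' ^ 2 ≤ 4 * v * I) : 0 ≤ b * v * T ^ 2 + v' * T + I / b := by
  have hid : 4 * b * v * (b * v * T ^ 2 + v' * T + I / b) =
      (2 * b * v * T + v') ^ 2 + (4 * v * I - v' ^ 2) := by field_simp; ring
  refine nonneg_of_mul_nonneg_right (a := 4 * b * v) ?_ (by positivity)
  rw [hid]
  exact add_nonneg (sq_nonneg _) (sub_nonneg.2 hI)

lemma transport_integrand_nonneg {c x T v v' I : ℝ} (ha : 0 ≤ a) (hb : 0 < b) (hc : 0 < c)
    (hx : x ∈ halfLine a) (hT : T ∈ halfLine a) (hv : 0 < v) (hI : v' ^ 2 ≤ 4 * v * I) :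
    0 ≤ v' * T + v * (a / x * T + c * (v * |x| ^ a) / (exp (-b * T ^ 2) * |T| ^ a)) +
      (I / b - (a + 1 + log c) * v - v * log v) := by
  have hwx := abs_rpow_pos_of_mem_halfLine ha hx
  have hwT := abs_rpow_pos_of_mem_halfLine ha hT
  set T' := c * (v * |x| ^ a) / (exp (-b * T ^ 2) * |T| ^ a) with hT'
  have hlog : log T' = log c + log v + log (|x| ^ a) + b * T ^ 2 - log (|T| ^ a) := by
    rw [hT', log_div (by positivity) (by positivity), log_mul hc.ne' (by positivity),
      log_mul hv.ne' hwx.ne', log_mul (exp_pos _).ne' hwT.ne', log_exp]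
    ring
  have hT'_log : log T' ≤ T' - 1 := log_le_sub_one_of_pos (by positivity)
  have hlog_v : log v ≤ T' + a / x * T - b * T ^ 2 - (a + 1 + log c) := by
    linarith [log_abs_rpow_sub_le ha hx hT]
  have hvlog := mul_le_mul_of_nonneg_left hlog_v hv.le
  linarith [quadratic_nonneg_of_sq_le (T := T) hb hv hI]

lemma exists_isTransport_gaussian {c : ℝ} {v : ℝ → ℝ} (ha : 0 ≤ a) (hb : 0 < b) (hc : 0 < c)
    (hv : ∀ x ∈ halfLine a, 0 < v x) (hvc : ContinuousOn v (halfLine a))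
    (hvi : Integrable v (monMeas a)) (hcv : c * ∫ x, v x ∂monMeas a = gaussMass a b) :
    ∃ T, IsTransport (halfLine a) (fun x => c * (v x * |x| ^ a))
      (fun x => exp (-b * x ^ 2) * |x| ^ a) T ∧
      IntegrableOn (fun x => v x * |x| ^ a * T x) (halfLine a) := by
  have hw := (continuous_abs_rpow ha).continuousOn (s := halfLine a)
  have hq : ∀ x ∈ halfLine a, 0 < c * (v x * |x| ^ a) := fun x hx =>
    mul_pos hc (mul_pos (hv x hx) (abs_rpow_pos_of_mem_halfLine ha hx))
  have hp : ∀ x ∈ halfLine a, 0 < exp (-b * x ^ 2) * |x| ^ a := fun x hx =>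
    mul_pos (exp_pos _) (abs_rpow_pos_of_mem_halfLine ha hx)
  obtain ⟨T, hT⟩ := exists_isTransport (isOpen_halfLine a) (ordConnected_halfLine a)
    (integrable_monMeas.1 (integrable_exp_monMeas ha hb))
    ((by fun_prop : Continuous fun x : ℝ => exp (-b * x ^ 2)).continuousOn.mul hw) hp
    ((integrable_monMeas.1 hvi).const_mul c) (continuousOn_const.mul (hvc.mul hw)) hq
    (by rw [integral_const_mul, ← integral_monMeas, ← integral_monMeas, hcv, gaussMass])
  refine ⟨T, hT, ?_⟩
  have hG : IntegrableOn (fun x => exp (-b * x ^ 2) * |x| ^ a * x) (halfLine a) :=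
    (integrable_monMeas.1 (integrable_mul_exp_monMeas ha hb)).congr_fun (fun x _ => by ring)
      (measurableSet_halfLine a)
  have hqT := hT.integrableOn_mul_comp (measurableSet_halfLine a) hp hq hG
  exact IntegrableOn.congr_fun (hqT.const_mul c⁻¹) (fun x _ => by field_simp)
    (measurableSet_halfLine a)

lemma ent_monMeas_le_of_pos {v v' I : ℝ → ℝ} (ha : 0 ≤ a) (hb : 0 < b)
    (hv : ∀ x ∈ halfLine a, 0 < v x) (hv' : ∀ x ∈ halfLine a, HasDerivAt v (v' x) x)
    (hI : ∀ x ∈ halfLine a, v' x ^ 2 ≤ 4 * v x * I x) (hvi : Integrable v (monMeas a))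
    (hvlog : Integrable (fun x => v x * log (v x)) (monMeas a)) (hIi : Integrable I (monMeas a))
    (hM : 0 < ∫ x, v x ∂monMeas a) :
    ent (monMeas a) v ≤
      (∫ x, I x ∂monMeas a) / b - (a + 1 + log (gaussMass a b)) * ∫ x, v x ∂monMeas a := by
  set M := ∫ x, v x ∂monMeas a
  have hZ := gaussMass_pos ha hb
  obtain ⟨c, hc, hlogc, hcM⟩ : ∃ c, 0 < c ∧ log c = log (gaussMass a b) - log M ∧
      c * M = gaussMass a b :=
    ⟨gaussMass a b / M, div_pos hZ hM, log_div hZ.ne' hM.ne', div_mul_cancel₀ _ hM.ne'⟩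
  obtain ⟨T, hT, hTi⟩ := exists_isTransport_gaussian ha hb hc hv
    (fun x hx => (hv' x hx).continuousAt.continuousWithinAt) hvi hcM
  have hderiv : ∀ x ∈ halfLine a, HasDerivAt (fun x => v x * |x| ^ a * T x)
      ((v' x * T x + v x * (a / x * T x +
        c * (v x * |x| ^ a) / (exp (-b * T x ^ 2) * |T x| ^ a))) * |x| ^ a) x := fun x hx =>
    (((hv' x hx).fun_mul (hasDerivAt_abs_rpow_of_mem_halfLine ha hx)).fun_mul
      (hT.hasDerivAt x hx)).congr_deriv (by ring)
  have hIv : Integrable (fun x => I x / b - (a + 1 + log c) * v x) (monMeas a) :=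
    (hIi.div_const b).sub (hvi.const_mul _)
  have hR : 0 ≤ ∫ x, I x / b - (a + 1 + log c) * v x - v x * log (v x) ∂monMeas a := by
    rw [integral_monMeas]
    refine setIntegral_halfLine_nonneg_of_hasDerivAt hderiv (fun x hx => ?_) (fun ha' x hx => ?_)
      hTi (integrable_monMeas.1 (hIv.sub hvlog))
    · rw [← add_mul]
      exact mul_nonneg
        (transport_integrand_nonneg ha hb hc hx (hT.mapsTo hx) (hv x hx) (hI x hx))
        (rpow_nonneg (abs_nonneg x) a)
    · exact mul_nonneg (mul_nonneg (hv x hx).le (rpow_nonneg (abs_nonneg x) a))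
        (hT.mapsTo hx ha').le
  rw [integral_sub hIv hvlog, integral_sub (hIi.div_const b) (hvi.const_mul _), integral_div,
    integral_const_mul, hlogc] at hR
  rw [ent]
  linarith

lemma integral_gaussian_mul_log {ε : ℝ} (ha : 0 ≤ a) (hb : 0 < b) (hε : 0 < ε) :
    Integrable (fun x => ε * exp (-b * x ^ 2) * log (ε * exp (-b * x ^ 2))) (monMeas a) ∧
      ∫ x, ε * exp (-b * x ^ 2) * log (ε * exp (-b * x ^ 2)) ∂monMeas a =
        ε * log ε * gaussMass a b - ε * b * ∫ x, x ^ 2 * exp (-b * x ^ 2) ∂monMeas a := by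
  have hexp := (integrable_exp_monMeas ha hb).const_mul (ε * log ε)
  have hsq := (integrable_sq_mul_exp_monMeas ha hb).const_mul (ε * b)
  have hid (x : ℝ) : ε * exp (-b * x ^ 2) * log (ε * exp (-b * x ^ 2)) =
      ε * log ε * exp (-b * x ^ 2) - ε * b * (x ^ 2 * exp (-b * x ^ 2)) := by
    rw [log_mul hε.ne' (exp_pos _).ne', log_exp]
    ring
  simp only [hid]
  exact ⟨hexp.sub hsq, by rw [integral_sub hexp hsq, integral_const_mul, integral_const_mul]; rfl⟩

lemma ent_monMeas_sq_add_le {ε : ℝ} {g : ℝ → ℝ} (ha : 0 ≤ a) (hb : 0 < b) (hε : 0 < ε)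
    (hg : ContDiff ℝ 1 g) (hs : HasCompactSupport g) :
    ent (monMeas a) (fun x => g x ^ 2 + ε * exp (-b * x ^ 2)) ≤
      (∫ x, deriv g x ^ 2 + ε * b ^ 2 * (x ^ 2 * exp (-b * x ^ 2)) ∂monMeas a) / b -
        (a + 1 + log (gaussMass a b)) * ∫ x, g x ^ 2 + ε * exp (-b * x ^ 2) ∂monMeas a := by
  have := isLocallyFiniteMeasure_monMeas ha
  have hκ := (integrable_exp_monMeas ha hb).const_mul ε
  have hvi : Integrable (fun x => g x ^ 2 + ε * exp (-b * x ^ 2)) (monMeas a) :=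
    (integrable_sq_of_hasCompactSupport hg.continuous hs).add hκ
  refine ent_monMeas_le_of_pos (v' := fun x => 2 * g x * deriv g x - 2 * b * x *
    (ε * exp (-b * x ^ 2))) ha hb (fun x _ => by positivity) (fun x _ => ?_) (fun x _ => ?_)
    hvi ?_ ?_ ?_
  · have hg' := (hg.differentiable one_ne_zero x).hasDerivAt.fun_pow 2
    have hκ' := ((((hasDerivAt_id x).fun_pow 2).const_mul (-b)).exp).const_mul ε
    refine (hg'.fun_add hκ').congr_deriv ?_
    simp only [id]
    ring
  -- the remainder in Cauchy–Schwarz for `(g, √κ)` and `(deriv g, -b x √κ)`,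
  -- where `κ = ε exp (-b x²)`
  · have hdiff : 0 ≤ ε * exp (-b * x ^ 2) * (b * x * g x + deriv g x) ^ 2 := by positivity
    linear_combination 4 * hdiff
  · exact integrable_add_mul_log_of_hasCompactSupport (hg.continuous.pow 2)
      (hasCompactSupport_sq hs) (by fun_prop)
      (integral_gaussian_mul_log ha hb hε).1
  · exact (integrable_sq_of_hasCompactSupport (hg.continuous_deriv le_rfl) hs.deriv).add
      ((integrable_sq_mul_exp_monMeas ha hb).const_mul _)
  · have hZ := gaussMass_pos ha hb
    calc 0 < ε * gaussMass a b := by positivity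
      _ = ∫ x, ε * exp (-b * x ^ 2) ∂monMeas a := (integral_const_mul _ _).symm
      _ ≤ _ := integral_mono hκ hvi fun x => le_add_of_nonneg_left (sq_nonneg (g x))

lemma mul_log_add_mul_log_le {s d : ℝ} (hs : 0 ≤ s) (hd : 0 ≤ d) :
    s * log s + d * log d ≤ (s + d) * log (s + d) := by
  rcases hs.eq_or_lt with rfl | hs
  · simp
  rcases hd.eq_or_lt with rfl | hd
  · simp
  rw [add_mul]
  gcongr <;> linarith

lemma ent_monMeas_sq_le_add {ε : ℝ} {g : ℝ → ℝ} (ha : 0 ≤ a) (hb : 0 < b) (hε : 0 < ε)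
    (hg : ContDiff ℝ 1 g) (hs : HasCompactSupport g) {S M E K Z : ℝ}
    (hS : ∫ x, g x ^ 2 * log (g x ^ 2) ∂monMeas a = S) (hM : ∫ x, g x ^ 2 ∂monMeas a = M)
    (hE : ∫ x, deriv g x ^ 2 ∂monMeas a = E)
    (hK : ∫ x, x ^ 2 * exp (-b * x ^ 2) ∂monMeas a = K) (hZ : gaussMass a b = Z) :
    S + (ε * log ε * Z - ε * b * K) - (M + ε * Z) * log (M + ε * Z) ≤
      (E + ε * b ^ 2 * K) / b - (a + 1 + log Z) * (M + ε * Z) := by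
  have := isLocallyFiniteMeasure_monMeas ha
  have hsq := integrable_sq_of_hasCompactSupport (μ := monMeas a) hg.continuous hs
  have hderiv := integrable_sq_of_hasCompactSupport (μ := monMeas a)
    (hg.continuous_deriv le_rfl) hs.deriv
  have hsqlog : Integrable (fun x => g x ^ 2 * log (g x ^ 2)) (monMeas a) :=
    integrable_mul_log_of_hasCompactSupport (hg.continuous.pow 2) (hasCompactSupport_sq hs)
  have hκ := integrable_exp_monMeas ha hb
  have hκ2 := integrable_sq_mul_exp_monMeas ha hb
  obtain ⟨hlogi, hlog⟩ := integral_gaussian_mul_log ha hb hε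
  have hent := ent_monMeas_sq_add_le ha hb hε hg hs
  rw [ent, integral_add hsq (hκ.const_mul ε), integral_add hderiv (hκ2.const_mul _),
    integral_const_mul, integral_const_mul, ← gaussMass, hM, hE, hK, hZ] at hent
  refine (sub_le_sub_right ?_ _).trans hent
  rw [← hK, ← hZ, ← hlog, ← hS, ← integral_add hsqlog hlogi]
  exact integral_mono (hsqlog.add hlogi)
    (integrable_add_mul_log_of_hasCompactSupport (hg.continuous.pow 2)
      (hasCompactSupport_sq hs) (by fun_prop) hlogi)
    fun x => mul_log_add_mul_log_le (sq_nonneg _) (by positivity)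

lemma ent_monMeas_sq_le {g : ℝ → ℝ} (ha : 0 ≤ a) (hb : 0 < b) (hg : ContDiff ℝ 1 g)
    (hs : HasCompactSupport g) :
    ent (monMeas a) (fun x => g x ^ 2) ≤ (∫ x, deriv g x ^ 2 ∂monMeas a) / b -
      (a + 1 + log (gaussMass a b)) * ∫ x, g x ^ 2 ∂monMeas a := by
  rw [ent]
  set S := ∫ x, g x ^ 2 * log (g x ^ 2) ∂monMeas a with hS
  set M := ∫ x, g x ^ 2 ∂monMeas a with hM
  set E := ∫ x, deriv g x ^ 2 ∂monMeas a with hE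
  set Z := gaussMass a b with hZ
  set K := ∫ x, x ^ 2 * exp (-b * x ^ 2) ∂monMeas a with hK
  have hlhs : Continuous fun ε : ℝ =>
      S + (ε * log ε * Z - ε * b * K) - (M + ε * Z) * log (M + ε * Z) :=
    (continuous_const.add ((continuous_mul_log.mul_const Z).sub (by fun_prop))).sub
      (continuous_mul_log.comp (by fun_prop))
  have hrhs : Continuous fun ε : ℝ =>
      (E + ε * b ^ 2 * K) / b - (a + 1 + log Z) * (M + ε * Z) := by fun_prop
  have hlim := le_of_tendsto_of_tendsto (b := 𝓝[>] 0)
    ((hlhs.tendsto 0).mono_left nhdsWithin_le_nhds) ((hrhs.tendsto 0).mono_left nhdsWithin_le_nhds)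
    (by
      filter_upwards [self_mem_nhdsWithin] with ε hε
      exact ent_monMeas_sq_le_add ha hb hε hg hs hS.symm hM.symm hE.symm hK.symm hZ.symm)
  simpa using hlim

end LogSobolevLine

section Entropy

variable {X Y : Type*} [MeasurableSpace X] [MeasurableSpace Y]

lemma mul_log_add_mul_log_sub_le {s t c : ℝ} (hs : 0 ≤ s) (ht : 0 ≤ t) (hst : t = 0 → s = 0)
    (hc : 0 < c) : s * log t + s * log c - s * log s ≤ c * t - s := by
  rcases hs.eq_or_lt with rfl | hs
  · simpa using mul_nonneg hc.le ht
  have ht' : 0 < t := ht.lt_of_ne' fun h => hs.ne' (hst h)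
  calc s * log t + s * log c - s * log s = s * log (c * t / s) := by
        rw [log_div (by positivity) hs.ne', log_mul hc.ne' ht'.ne']
        ring
    _ ≤ s * (c * t / s - 1) := by gcongr; exact log_le_sub_one_of_pos (by positivity)
    _ = c * t - s := by field_simp

lemma integral_mul_log_sub_le_ent {μ : Measure X} {f k : X → ℝ} (hf0 : ∀ x, 0 ≤ f x)
    (hk0 : ∀ x, 0 ≤ k x) (hkf : ∀ᵐ x ∂μ, k x = 0 → f x = 0) (hf : Integrable f μ)
    (hk : Integrable k μ) (hff : Integrable (fun x => f x * log (f x)) μ)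
    (hfk : Integrable (fun x => f x * log (k x)) μ) :
    ∫ x, f x * log (k x) ∂μ - (∫ x, f x ∂μ) * log (∫ x, k x ∂μ) ≤ ent μ f := by
  rcases (integral_nonneg (μ := μ) (f := f) hf0).eq_or_lt with hM | hM
  · have hf_ae : f =ᵐ[μ] 0 := (integral_eq_zero_iff_of_nonneg hf0 hf).1 hM.symm
    have hzero (u : X → ℝ) : ∫ x, f x * u x ∂μ = 0 := by
      refine integral_eq_zero_of_ae ?_
      filter_upwards [hf_ae] with x hx
      simp [hx]
    rw [ent, hzero fun x => log (k x), hzero fun x => log (f x), ← hM]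
    simp
  have hm : 0 < ∫ x, k x ∂μ := by
    refine (integral_nonneg (μ := μ) (f := k) hk0).lt_of_ne' fun hm => hM.ne' ?_
    refine integral_eq_zero_of_ae ?_
    filter_upwards [hkf, (integral_eq_zero_iff_of_nonneg hk0 hk).1 hm] with x hx hkx
    exact hx hkx
  set M := ∫ x, f x ∂μ
  set m := ∫ x, k x ∂μ
  have hadd : Integrable (fun x => f x * log (k x) + f x * log (M / m)) μ :=
    hfk.add (hf.mul_const _)
  have hint : ∫ x, f x * log (k x) + f x * log (M / m) - f x * log (f x) ∂μ ≤
      ∫ x, M / m * k x - f x ∂μ := by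
    refine integral_mono_ae (hadd.sub hff) ((hk.const_mul _).sub hf) ?_
    filter_upwards [hkf] with x hx
    exact mul_log_add_mul_log_sub_le (hf0 x) (hk0 x) hx (div_pos hM hm)
  rw [integral_sub hadd hff, integral_add hfk (hf.mul_const _),
    integral_mul_const, integral_sub (hk.const_mul _) hf, integral_const_mul,
    div_mul_cancel₀ _ hm.ne', sub_self, log_div hM.ne' hm.ne'] at hint
  rw [ent]
  linarith

variable {μ : Measure X} {ν : Measure Y} [SFinite μ] [SFinite ν] {h : X × Y → ℝ}

lemma ae_ae_eq_zero_of_integral_eq_zero (hh : Measurable h) (h0 : ∀ z, 0 ≤ h z)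
    (hi : Integrable h (μ.prod ν)) :
    ∀ᵐ x ∂μ, ∀ᵐ y ∂ν, ∫ x', h (x', y) ∂μ = 0 → h (x, y) = 0 := by
  have hH : Measurable fun y => ∫ x, h (x, y) ∂μ :=
    hh.stronglyMeasurable.integral_prod_left'.measurable
  refine (Measure.ae_ae_comm (p := fun x y => ∫ x', h (x', y) ∂μ = 0 → h (x, y) = 0) ?_).2 ?_
  · exact ((measurableSet_eq_fun (hH.comp measurable_snd) measurable_const).imp
      (measurableSet_eq_fun hh measurable_const))
  · filter_upwards [hi.prod_left_ae] with y hy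
    by_cases hzero : ∫ x, h (x, y) ∂μ = 0
    · filter_upwards [(integral_eq_zero_iff_of_nonneg (fun x => h0 (x, y)) hy).1 hzero] with x hx _
      exact hx
    · exact Eventually.of_forall fun x hx => absurd hx hzero

lemma integrable_mul_log_integral (hh : Measurable h) (h0 : ∀ z, 0 ≤ h z)
    (hi : Integrable h (μ.prod ν))
    (hH : Integrable (fun y => (∫ x, h (x, y) ∂μ) * log (∫ x, h (x, y) ∂μ)) ν) :
    Integrable (fun z => h z * log (∫ x, h (x, z.2) ∂μ)) (μ.prod ν) := by
  have hmeas : Measurable fun y => log (∫ x, h (x, y) ∂μ) :=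
    measurable_log.comp hh.stronglyMeasurable.integral_prod_left'.measurable
  have hprod : Measurable fun z : X × Y => h z * log (∫ x, h (x, z.2) ∂μ) :=
    hh.mul (hmeas.comp measurable_snd)
  refine (integrable_prod_iff' hprod.aestronglyMeasurable).2
    ⟨?_, hH.norm.congr (Eventually.of_forall fun y => ?_)⟩
  · filter_upwards [hi.prod_left_ae] with y hy using hy.mul_const _
  · simp only [norm_mul, integral_mul_const, norm_of_nonneg (h0 _),
      norm_of_nonneg (integral_nonneg fun x => h0 (x, y))]

lemma ent_prod_eq (hi : Integrable h (μ.prod ν))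
    (hl : Integrable (fun z => h z * log (h z)) (μ.prod ν))
    (hH : Integrable (fun y => (∫ x, h (x, y) ∂μ) * log (∫ x, h (x, y) ∂μ)) ν) :
    ent (μ.prod ν) h =
      ∫ y, ent μ (fun x => h (x, y)) ∂ν + ent ν (fun y => ∫ x, h (x, y) ∂μ) := by
  simp only [ent]
  rw [integral_sub hl.integral_prod_right hH, integral_prod_symm _ hl, integral_prod_symm _ hi]
  ring

lemma ent_integral_le (hh : Measurable h) (h0 : ∀ z, 0 ≤ h z) (hi : Integrable h (μ.prod ν))
    (hl : Integrable (fun z => h z * log (h z)) (μ.prod ν))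
    (hH : Integrable (fun y => (∫ x, h (x, y) ∂μ) * log (∫ x, h (x, y) ∂μ)) ν) {R : X → ℝ}
    (hR : Integrable R μ) (hle : ∀ᵐ x ∂μ, ent ν (fun y => h (x, y)) ≤ R x) :
    ent ν (fun y => ∫ x, h (x, y) ∂μ) ≤ ∫ x, R x ∂μ := by
  have hlogH := integrable_mul_log_integral hh h0 hi hH
  have hswap : ent ν (fun y => ∫ x, h (x, y) ∂μ) = ∫ x, ((∫ y, h (x, y) * log (∫ x', h (x', y) ∂μ)
      ∂ν) - (∫ y, h (x, y) ∂ν) * log (∫ y, ∫ x', h (x', y) ∂μ ∂ν)) ∂μ := by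
    rw [integral_sub hlogH.integral_prod_left (hi.integral_prod_left.mul_const _),
      integral_mul_const, ← integral_prod _ hlogH, ← integral_prod _ hi,
      integral_prod_symm _ hlogH, integral_prod_symm _ hi, ent]
    simp only [integral_mul_const]
  rw [hswap]
  refine integral_mono_ae
    (hlogH.integral_prod_left.sub (hi.integral_prod_left.mul_const _)) hR ?_
  filter_upwards [hle, ae_ae_eq_zero_of_integral_eq_zero hh h0 hi, hi.prod_right_ae,
    hl.prod_right_ae, hlogH.prod_right_ae] with x hx hzero hix hlx hHx
  exact (integral_mul_log_sub_le_ent (fun y => h0 (x, y))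
    (fun y => integral_nonneg fun x => h0 (x, y)) hzero hix hi.integral_prod_right hlx hHx).trans hx

lemma ent_prod_le (hh : Measurable h) (h0 : ∀ z, 0 ≤ h z) (hi : Integrable h (μ.prod ν))
    (hl : Integrable (fun z => h z * log (h z)) (μ.prod ν))
    (hH : Integrable (fun y => (∫ x, h (x, y) ∂μ) * log (∫ x, h (x, y) ∂μ)) ν)
    {R₁ R₂ : X × Y → ℝ} (hR₁ : Integrable R₁ (μ.prod ν)) (hR₂ : Integrable R₂ (μ.prod ν))
    (hle₁ : ∀ᵐ y ∂ν, ent μ (fun x => h (x, y)) ≤ ∫ x, R₁ (x, y) ∂μ)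
    (hle₂ : ∀ᵐ x ∂μ, ent ν (fun y => h (x, y)) ≤ ∫ y, R₂ (x, y) ∂ν) :
    ent (μ.prod ν) h ≤ ∫ z, R₁ z ∂μ.prod ν + ∫ z, R₂ z ∂μ.prod ν := by
  rw [ent_prod_eq hi hl hH, integral_prod_symm _ hR₁, integral_prod _ hR₂]
  exact add_le_add
    (integral_mono_ae (hl.integral_prod_right.sub hH) hR₁.integral_prod_right hle₁)
    (ent_integral_le hh h0 hi hl hH hR₂.integral_prod_left hle₂)

end Entropy

section Tensorization

lemma measurePreserving_finCons {n : ℕ} {X : Type*} [MeasurableSpace X]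
    (μ : Fin (n + 1) → Measure X) [∀ i, SigmaFinite (μ i)] :
    MeasurePreserving (fun z : X × (Fin n → X) => (Fin.cons z.1 z.2 : Fin (n + 1) → X))
      ((μ 0).prod (Measure.pi fun j => μ j.succ)) (Measure.pi μ) := by
  have hsymm := (measurePreserving_piFinSuccAbove μ 0).symm
  simp only [Fin.zero_succAbove] at hsymm
  convert hsymm using 1
  funext z
  simp [MeasurableEquiv.piFinSuccAbove_symm_apply, Fin.insertNthEquiv]

lemma measurableEmbedding_finCons (n : ℕ) (X : Type*) [MeasurableSpace X] :
    MeasurableEmbedding (fun z : X × (Fin n → X) => (Fin.cons z.1 z.2 : Fin (n + 1) → X)) := by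
  convert (MeasurableEquiv.piFinSuccAbove (fun _ : Fin (n + 1) => X) 0).symm.measurableEmbedding
    using 1
  funext z
  simp [MeasurableEquiv.piFinSuccAbove_symm_apply, Fin.insertNthEquiv]

lemma integral_pi_succ {n : ℕ} {X : Type*} [MeasurableSpace X] (μ : Fin (n + 1) → Measure X)
    [∀ i, SigmaFinite (μ i)] (F : (Fin (n + 1) → X) → ℝ) :
    ∫ x, F x ∂Measure.pi μ = ∫ z : X × (Fin n → X), F (Fin.cons z.1 z.2)
      ∂(μ 0).prod (Measure.pi fun j => μ j.succ) :=
  ((measurePreserving_finCons μ).integral_comp (measurableEmbedding_finCons n X) F).symm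

lemma hasCompactSupport_prodMk {X Y : Type*} [TopologicalSpace X] [TopologicalSpace Y] [R1Space Y]
    {g : X × Y → ℝ} (hg : HasCompactSupport g) (x : X) : HasCompactSupport fun y => g (x, y) :=
  .intro (hg.isCompact.image continuous_snd) fun _ hy =>
    image_eq_zero_of_notMem_tsupport fun h => hy ⟨_, h, rfl⟩

lemma hasCompactSupport_integral_prodMk {X Y : Type*} [TopologicalSpace X] [MeasurableSpace X]
    [TopologicalSpace Y] [R1Space Y] (μ : Measure X) {g : X × Y → ℝ} (hg : HasCompactSupport g) :
    HasCompactSupport fun y => ∫ x, g (x, y) ∂μ :=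
  .intro (hg.isCompact.image continuous_snd) fun _ hy => integral_eq_zero_of_ae <|
    Eventually.of_forall fun _ => image_eq_zero_of_notMem_tsupport fun h => hy ⟨_, h, rfl⟩

lemma continuous_integral_prodMk {X Y : Type*} [TopologicalSpace X] [MeasurableSpace X]
    [OpensMeasurableSpace X] [TopologicalSpace Y] {μ : Measure X} [IsFiniteMeasureOnCompacts μ]
    {g : X × Y → ℝ} (hg : Continuous g) (hs : HasCompactSupport g) :
    Continuous fun y => ∫ x, g (x, y) ∂μ := by
  rw [← continuousOn_univ]
  refine continuousOn_integral_of_compact_support (f := fun y x => g (x, y))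
    (hs.isCompact.image continuous_fst) (hg.comp continuous_swap).continuousOn fun y x _ hx => ?_
  exact image_eq_zero_of_notMem_tsupport fun h => hx ⟨_, h, rfl⟩

lemma ent_prod_le_of_hasCompactSupport {X Y : Type*}
    [TopologicalSpace X] [MeasurableSpace X] [BorelSpace X]
    [TopologicalSpace Y] [R1Space Y] [SecondCountableTopology Y] [MeasurableSpace Y] [BorelSpace Y]
    {μ : Measure X} {ν : Measure Y} [SFinite μ] [SFinite ν]
    [IsFiniteMeasureOnCompacts μ] [IsFiniteMeasureOnCompacts ν]
    {h R₁ R₂ : X × Y → ℝ} (hc : Continuous h) (hs : HasCompactSupport h) (h0 : ∀ z, 0 ≤ h z)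
    (hR₁ : Integrable R₁ (μ.prod ν)) (hR₂ : Integrable R₂ (μ.prod ν))
    (hle₁ : ∀ᵐ y ∂ν, ent μ (fun x => h (x, y)) ≤ ∫ x, R₁ (x, y) ∂μ)
    (hle₂ : ∀ᵐ x ∂μ, ent ν (fun y => h (x, y)) ≤ ∫ y, R₂ (x, y) ∂ν) :
    ent (μ.prod ν) h ≤ ∫ z, R₁ z ∂μ.prod ν + ∫ z, R₂ z ∂μ.prod ν :=
  ent_prod_le hc.measurable h0 (hc.integrable_of_hasCompactSupport hs)
    (integrable_mul_log_of_hasCompactSupport hc hs)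
    (integrable_mul_log_of_hasCompactSupport (continuous_integral_prodMk hc hs)
      (hasCompactSupport_integral_prodMk μ hs)) hR₁ hR₂ hle₁ hle₂

lemma ent_pi_le {n : ℕ} {X : Type*} [Nonempty X] [TopologicalSpace X] [R1Space X]
    [SecondCountableTopology X] [MeasurableSpace X] [BorelSpace X] (μ : Fin n → Measure X)
    [∀ i, IsLocallyFiniteMeasure (μ i)] {h : (Fin n → X) → ℝ} {r : Fin n → (Fin n → X) → ℝ}
    (hc : Continuous h) (hs : HasCompactSupport h) (h0 : ∀ x, 0 ≤ h x)
    (hr : ∀ i, Integrable (r i) (Measure.pi μ))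
    (hle : ∀ i x, ent (μ i) (fun s => h (Function.update x i s)) ≤
      ∫ s, r i (Function.update x i s) ∂μ i) :
    ent (Measure.pi μ) h ≤ ∑ i, ∫ x, r i x ∂Measure.pi μ := by
  induction n with
  | zero => simp [ent, Measure.pi_of_empty μ finZeroElim]
  | succ n ih =>
    let e : X × (Fin n → X) ≃ₜ (Fin (n + 1) → X) :=
      { toEquiv := Fin.consEquiv fun _ => X
        continuous_toFun :=
          Continuous.finCons (A := fun _ => X) continuous_fst continuous_snd
        continuous_invFun := (continuous_apply 0).prodMk
          (continuous_pi fun i : Fin n => continuous_apply i.succ) }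
    obtain ⟨x₀⟩ := ‹Nonempty X›
    have hsc : HasCompactSupport fun z : X × (Fin n → X) => h (Fin.cons z.1 z.2) :=
      hs.comp_homeomorph e
    have hr' i : Integrable (fun z : X × (Fin n → X) => r i (Fin.cons z.1 z.2))
        ((μ 0).prod (Measure.pi fun j => μ j.succ)) :=
      ((measurePreserving_finCons μ).integrable_comp_emb (measurableEmbedding_finCons n X)).2 (hr i)
    simp only [ent, Fin.sum_univ_succ, integral_pi_succ μ]
    rw [← integral_finsetSum _ fun i _ => hr' i.succ]
    refine ent_prod_le_of_hasCompactSupport (hc.comp e.continuous) hsc (fun z => h0 _) (hr' 0)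
      (integrable_finsetSum _ fun i _ => hr' i.succ) (Eventually.of_forall fun y => ?_) ?_
    · simpa only [Fin.update_cons_zero] using hle 0 (Fin.cons x₀ y)
    · filter_upwards [eventually_all.2 fun i : Fin n => (hr' i.succ).prod_right_ae] with x hx
      rw [integral_finsetSum _ fun i _ => hx i]
      refine ih (fun j => μ j.succ) (r := fun i y => r i.succ (Fin.cons x y))
        (hc.comp (continuous_const.finCons continuous_id)) (hasCompactSupport_prodMk hsc x)
        (fun y => h0 _) hx fun i y => ?_
      simpa only [← Fin.cons_update] using hle i.succ (Fin.cons x y)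

end Tensorization

section ProductMeasure

lemma lintegral_pi_prod_eq_prod {n : ℕ} {X : Type*} [MeasurableSpace X] (μ : Fin n → Measure X)
    [∀ i, SigmaFinite (μ i)] {g : Fin n → X → ENNReal} (hg : ∀ i, Measurable (g i)) :
    ∫⁻ x, ∏ i, g i (x i) ∂Measure.pi μ = ∏ i, ∫⁻ s, g i s ∂μ i := by
  induction n with
  | zero => simp [Measure.pi_of_empty μ finZeroElim]
  | succ n ih =>
    rw [← (measurePreserving_finCons μ).lintegral_comp_emb (measurableEmbedding_finCons n X)]
    simp only [Fin.prod_univ_succ, Fin.cons_zero, Fin.cons_succ]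
    rw [lintegral_prod_mul (f := g 0) (g := fun y : Fin n → X => ∏ i : Fin n, g i.succ (y i))
      (hg 0).aemeasurable (Finset.measurable_prod _ fun i _ =>
        (hg i.succ).comp (measurable_pi_apply i)).aemeasurable,
      ih (fun i => μ i.succ) fun i => hg i.succ]

lemma pi_withDensity {n : ℕ} {X : Type*} [MeasurableSpace X] (μ : Fin n → Measure X)
    [∀ i, SigmaFinite (μ i)] {g : Fin n → X → ENNReal} (hg : ∀ i, Measurable (g i))
    [∀ i, SigmaFinite ((μ i).withDensity (g i))] :
    Measure.pi (fun i => (μ i).withDensity (g i)) =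
      (Measure.pi μ).withDensity fun x => ∏ i, g i (x i) := by
  refine Measure.pi_eq fun s hs => ?_
  rw [withDensity_apply _ (MeasurableSet.univ_pi hs), Measure.restrict_pi_pi,
    lintegral_pi_prod_eq_prod _ hg]
  exact Finset.prod_congr rfl fun i _ => (withDensity_apply _ (hs i)).symm

lemma monSet_eq_preimage {ι : Type*} [Fintype ι] (A : ι → ℝ) :
    monSet A = WithLp.ofLp ⁻¹' Set.univ.pi fun i => halfLine (A i) := by
  ext x
  simp [monSet, halfLine, Set.mem_pi]

lemma integral_pi_monMeas {n : ℕ} {A : Fin n → ℝ} (hA : ∀ i, 0 ≤ A i) (F : (Fin n → ℝ) → ℝ) :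
    ∫ x, F x ∂Measure.pi (fun i => monMeas (A i)) =
      ∫ x in monSet A, F (WithLp.ofLp x) * monWeight A x := by
  have hfin := fun i => isLocallyFiniteMeasure_monMeas (hA i)
  have hmeas i : Measurable fun s : ℝ => ENNReal.ofReal (|s| ^ A i) := by fun_prop
  have hpi : Measure.pi (fun i => monMeas (A i)) =
      (volume.restrict (Set.univ.pi fun i => halfLine (A i))).withDensity fun x =>
        ∏ i, ENNReal.ofReal (|x i| ^ A i) := by
    unfold monMeas at hfin ⊢
    rw [pi_withDensity _ hmeas, ← Measure.restrict_pi_pi, volume_pi]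
  rw [hpi, integral_withDensity_eq_integral_toReal_smul (by fun_prop)
      (Eventually.of_forall fun _ => ENNReal.prod_lt_top fun _ _ => ENNReal.ofReal_lt_top),
    monSet_eq_preimage, ← (PiLp.volume_preserving_ofLp (Fin n)).setIntegral_preimage_emb
      (MeasurableEquiv.toLp 2 (Fin n → ℝ)).symm.measurableEmbedding]
  refine integral_congr_ae (Eventually.of_forall fun x => ?_)
  simp only [ENNReal.toReal_prod, ENNReal.toReal_ofReal (rpow_nonneg (abs_nonneg _) _),
    smul_eq_mul, monWeight, mul_comm]

end ProductMeasure

section LogSobolevPi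

variable {n : ℕ} {A : Fin n → ℝ} {b : ℝ} {F : (Fin n → ℝ) → ℝ}

lemma ent_monMeas_sq_update_le {i : Fin n} (hA : 0 ≤ A i) (hb : 0 < b) (hF : ContDiff ℝ 1 F)
    (hs : HasCompactSupport F) (x : Fin n → ℝ) :
    ent (monMeas (A i)) (fun s => F (Function.update x i s) ^ 2) ≤
      ∫ s, fderiv ℝ F (Function.update x i s) (Pi.single i 1) ^ 2 / b -
        (A i + 1 + log (gaussMass (A i) b)) * F (Function.update x i s) ^ 2 ∂monMeas (A i) := by
  have := isLocallyFiniteMeasure_monMeas hA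
  have hderiv (s : ℝ) : deriv (fun s => F (Function.update x i s)) s =
      fderiv ℝ F (Function.update x i s) (Pi.single i 1) :=
    ((hF.differentiable one_ne_zero).differentiableAt.hasFDerivAt.comp_hasDerivAt s
      (hasDerivAt_update x i s)).deriv
  have hFi : ContDiff ℝ 1 fun s => F (Function.update x i s) := hF.comp (contDiff_update 1 x i)
  have hsi : HasCompactSupport fun s => F (Function.update x i s) :=
    hs.comp_isClosedEmbedding (isClosedEmbedding_update x i)
  refine (ent_monMeas_sq_le hA hb hFi hsi).trans_eq ?_
  simp only [← hderiv]
  rw [integral_sub, integral_div, integral_const_mul]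
  · exact (integrable_sq_of_hasCompactSupport (hFi.continuous_deriv le_rfl) hsi.deriv).div_const _
  · exact (integrable_sq_of_hasCompactSupport hFi.continuous hsi).const_mul _

lemma ent_pi_monMeas_sq_le (hA : ∀ i, 0 ≤ A i) (hb : 0 < b) (hF : ContDiff ℝ 1 F)
    (hs : HasCompactSupport F) :
    ent (Measure.pi fun i => monMeas (A i)) (fun x => F x ^ 2) ≤
      (∫ x, ∑ i, fderiv ℝ F x (Pi.single i 1) ^ 2 ∂Measure.pi fun i => monMeas (A i)) / b -
        (monDim A + log (∏ i, gaussMass (A i) b)) *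
          ∫ x, F x ^ 2 ∂Measure.pi fun i => monMeas (A i) := by
  have := fun i => isLocallyFiniteMeasure_monMeas (hA i)
  set μ := Measure.pi fun i => monMeas (A i)
  have hsq : Integrable (fun x => F x ^ 2) μ :=
    integrable_sq_of_hasCompactSupport hF.continuous hs
  have hpartial i : Integrable (fun x => fderiv ℝ F x (Pi.single i 1) ^ 2) μ :=
    integrable_sq_of_hasCompactSupport
      ((hF.continuous_fderiv one_ne_zero).clm_apply continuous_const) (hs.fderiv_apply ℝ _)
  have hbound i := ((hpartial i).div_const b).sub
    (hsq.const_mul (A i + 1 + log (gaussMass (A i) b)))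
  have hconst : monDim A + log (∏ i, gaussMass (A i) b) =
      ∑ i, (A i + 1 + log (gaussMass (A i) b)) := by
    rw [log_prod fun i _ => (gaussMass_pos (hA i) hb).ne', Finset.sum_add_distrib,
      Finset.sum_add_distrib, monDim]
    simp [add_comm]
  calc ent μ (fun x => F x ^ 2) ≤ ∑ i, ∫ x, fderiv ℝ F x (Pi.single i 1) ^ 2 / b -
        (A i + 1 + log (gaussMass (A i) b)) * F x ^ 2 ∂μ :=
      ent_pi_le _ (hF.continuous.pow 2) (hasCompactSupport_sq hs) (fun x => sq_nonneg _) hbound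
        fun i x => ent_monMeas_sq_update_le (hA i) hb hF hs x
    _ = _ := by
      rw [hconst, integral_finsetSum _ fun i _ => hpartial i, Finset.sum_div, Finset.sum_mul,
        ← Finset.sum_sub_distrib]
      refine Finset.sum_congr rfl fun i _ => ?_
      rw [integral_sub ((hpartial i).div_const b) (hsq.const_mul _), integral_div,
        integral_const_mul]

end LogSobolevPi

section Nash

lemma pos_of_forall_mul_log_le {D X N E Z : ℝ} (hD : 0 < D) (hX : 0 < X) (hE : 0 ≤ E) (hZ : 0 < Z)
    (h : ∀ b > 0, X * log X - 2 * X * log N ≤ E / b - (D + log (b ^ (-(D / 2)) * Z)) * X) :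
    0 < E := by
  refine hE.lt_of_ne fun hE0 => ?_
  -- with `E = 0`, the two sides of `h` differ by exactly `D X` at this `b`
  have hgap := h (exp (2 / D * (log X - 2 * log N + log Z))) (exp_pos _)
  rw [← hE0, zero_div, log_mul (by positivity) hZ.ne', log_rpow (exp_pos _), log_exp] at hgap
  have hcancel : -(D / 2) * (2 / D * (log X - 2 * log N + log Z)) =
      -(log X - 2 * log N + log Z) := by field_simp
  rw [hcancel] at hgap
  have hDX := mul_pos hD hX
  linarith

lemma nash_of_forall_mul_log_le {D X N E Z : ℝ} (hD : 0 < D) (hX : 0 < X) (hN : 0 < N)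
    (hE : 0 ≤ E) (hZ : 0 < Z)
    (h : ∀ b > 0, X * log X - 2 * X * log N ≤ E / b - (D + log (b ^ (-(D / 2)) * Z)) * X) :
    X ^ (1 + 2 / D) ≤ 2 / (Z ^ (2 / D) * exp 1 * D) * E * N ^ (4 / D) := by
  replace hE := pos_of_forall_mul_log_le hD hX hE hZ h
  -- the `b` minimising the right-hand side of `h`
  have hb : 0 < 2 * E / (D * X) := by positivity
  have hopt := h (2 * E / (D * X)) hb
  have hEb : E / (2 * E / (D * X)) = D / 2 * X := by field_simp
  have hlogb : log (2 * E / (D * X)) = log 2 + log E - (log D + log X) := by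
    rw [log_div (by positivity) (by positivity), log_mul two_ne_zero hE.ne', log_mul hD.ne' hX.ne']
  rw [hEb, log_mul (by positivity) hZ.ne', log_rpow hb, hlogb] at hopt
  have hlog : log X - 2 * log N ≤
      D / 2 * (log 2 + log E - (log D + log X)) - D / 2 - log Z := by
    refine le_of_mul_le_mul_left ?_ hX
    linarith
  rw [← log_le_log_iff (by positivity) (by positivity), log_rpow hX, log_mul (by positivity)
    (by positivity), log_mul (by positivity) hE.ne', log_div two_ne_zero (by positivity),
    log_mul (by positivity) hD.ne', log_mul (by positivity) (exp_pos _).ne', log_rpow hZ,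
    log_rpow hN, log_exp]
  calc (1 + 2 / D) * log X = log X + 2 / D * (log X - 2 * log N) + 4 / D * log N := by ring
    _ ≤ log X + 2 / D * (D / 2 * (log 2 + log E - (log D + log X)) - D / 2 - log Z) +
        4 / D * log N := by gcongr
    _ = log 2 - (2 / D * log Z + 1 + log D) + log E + 4 / D * log N := by field_simp; ring

variable {X : Type*} [MeasurableSpace X] {μ : Measure X} {f : X → ℝ}

lemma mul_log_sub_le_ent_sq (hf : Integrable f μ) (hsq : Integrable (fun x => f x ^ 2) μ)
    (hlog : Integrable (fun x => f x ^ 2 * log (f x ^ 2)) μ) :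
    (∫ x, f x ^ 2 ∂μ) * log (∫ x, f x ^ 2 ∂μ) - 2 * (∫ x, f x ^ 2 ∂μ) * log (∫ x, |f x| ∂μ) ≤
      ent μ fun x => f x ^ 2 := by
  have hlog_abs (x : X) : f x ^ 2 * log |f x| = f x ^ 2 * log (f x ^ 2) / 2 := by
    rw [log_abs, log_pow]
    ring
  have hgibbs := integral_mul_log_sub_le_ent (f := fun x => f x ^ 2) (k := fun x => |f x|)
    (fun x => sq_nonneg _) (fun x => abs_nonneg _) (Eventually.of_forall fun x => by simp)
    hsq hf.abs hlog (by simpa only [hlog_abs] using hlog.div_const 2)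
  simp only [hlog_abs, integral_div] at hgibbs
  rw [ent] at hgibbs ⊢
  linarith

lemma nash_of_forall_ent_sq_le {D E Z : ℝ} (hD : 0 < D) (hE : 0 ≤ E) (hZ : 0 < Z)
    (hf : Integrable f μ) (hsq : Integrable (fun x => f x ^ 2) μ)
    (hlog : Integrable (fun x => f x ^ 2 * log (f x ^ 2)) μ)
    (h : ∀ b > 0, ent μ (fun x => f x ^ 2) ≤
      E / b - (D + log (b ^ (-(D / 2)) * Z)) * ∫ x, f x ^ 2 ∂μ) :
    (∫ x, f x ^ 2 ∂μ) ^ (1 + 2 / D) ≤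
      2 / (Z ^ (2 / D) * exp 1 * D) * E * (∫ x, |f x| ∂μ) ^ (4 / D) := by
  have hN : 0 ≤ ∫ x, |f x| ∂μ := integral_nonneg fun x => abs_nonneg (f x)
  have hX : 0 ≤ ∫ x, f x ^ 2 ∂μ := integral_nonneg fun x => sq_nonneg (f x)
  rcases hX.eq_or_lt with hX | hX
  · rw [← hX, zero_rpow (by positivity)]
    positivity
  have hN' : 0 < ∫ x, |f x| ∂μ := hN.lt_of_ne' fun hzero => hX.ne' <| by
    refine integral_eq_zero_of_ae ?_
    filter_upwards [(integral_eq_zero_iff_of_nonneg (fun x => abs_nonneg (f x)) hf.abs).1 hzero]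
      with x hx
    simpa using hx
  exact nash_of_forall_mul_log_le hD hX hN' hE hZ fun b hb =>
    (mul_log_sub_le_ent_sq hf hsq hlog).trans (h b hb)

end Nash

section Euclidean

lemma sum_sq_apply_single {ι : Type*} [Fintype ι] [DecidableEq ι]
    (T : EuclideanSpace ℝ ι →L[ℝ] ℝ) : ∑ i, T (EuclideanSpace.single i 1) ^ 2 = ‖T‖ ^ 2 := by
  rw [← (InnerProductSpace.toDual ℝ (EuclideanSpace ℝ ι)).symm.norm_map T,
    EuclideanSpace.norm_sq_eq]
  refine Finset.sum_congr rfl fun i _ => ?_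
  rw [← InnerProductSpace.toDual_symm_apply (𝕜 := ℝ) (y := T), EuclideanSpace.inner_single_right]
  simp

lemma sum_sq_fderiv_comp_toLp {ι : Type*} [Fintype ι] [DecidableEq ι]
    {f : EuclideanSpace ℝ ι → ℝ} (hf : Differentiable ℝ f) (x : ι → ℝ) :
    ∑ i, fderiv ℝ (fun y => f (WithLp.toLp 2 y)) x (Pi.single i 1) ^ 2 =
      ‖fderiv ℝ f (WithLp.toLp 2 x)‖ ^ 2 := by
  have hcomp : HasFDerivAt (fun y => f (WithLp.toLp 2 y)) ((fderiv ℝ f (WithLp.toLp 2 x)).comp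
      ((PiLp.continuousLinearEquiv 2 ℝ fun _ : ι => ℝ).symm : (ι → ℝ) →L[ℝ] _)) x :=
    HasFDerivAt.comp (g := f) x (hf _).hasFDerivAt
      (PiLp.continuousLinearEquiv 2 ℝ fun _ : ι => ℝ).symm.hasFDerivAt
  rw [hcomp.fderiv, ← sum_sq_apply_single]
  rfl

end Euclidean

lemma monDim_pos {ι : Type*} [Fintype ι] [Nonempty ι] {A : ι → ℝ} (hA : ∀ i, 0 ≤ A i) :
    0 < monDim A :=
  add_pos_of_pos_of_nonneg (Nat.cast_pos.2 Fintype.card_pos) (Finset.sum_nonneg fun i _ => hA i)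

lemma prod_Gamma_div_pos {ι : Type*} [Fintype ι] {A : ι → ℝ} (hA : ∀ i, 0 ≤ A i) :
    0 < (∏ i, Gamma ((A i + 1) / 2)) / 2 ^ monK A :=
  div_pos (Finset.prod_pos fun i _ => Gamma_pos_of_pos (by linarith [hA i])) (by positivity)

/-- the Nash type inequality with monomial weights. -/
theorem nash_monomial_weight {n : ℕ} (hn : 0 < n) (A : Fin n → ℝ) (hA : ∀ i, 0 ≤ A i)
    (f : EuclideanSpace ℝ (Fin n) → ℝ) (hf : ContDiff ℝ 1 f) (hsupp : HasCompactSupport f) :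
    (∫ x in monSet A, f x ^ 2 * monWeight A x) ^ (1 + 2 / monDim A) ≤
      2 / (monPi A * exp 1 * monDim A) *
        (∫ x in monSet A, ‖fderiv ℝ f x‖ ^ 2 * monWeight A x) *
        (∫ x in monSet A, |f x| * monWeight A x) ^ (4 / monDim A) := by
  have : Nonempty (Fin n) := Fin.pos_iff_nonempty.1 hn
  have := fun i => isLocallyFiniteMeasure_monMeas (hA i)
  let e := (PiLp.continuousLinearEquiv 2 ℝ fun _ : Fin n => ℝ).symm
  have hF : ContDiff ℝ 1 fun y : Fin n → ℝ => f (WithLp.toLp 2 y) := hf.comp e.contDiff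
  have hFs : HasCompactSupport fun y : Fin n → ℝ => f (WithLp.toLp 2 y) :=
    hsupp.comp_homeomorph e.toHomeomorph
  have hnash := nash_of_forall_ent_sq_le (monDim_pos hA)
    (integral_nonneg fun x => sq_nonneg ‖fderiv ℝ f (WithLp.toLp 2 x)‖) (prod_Gamma_div_pos hA)
    (hF.continuous.integrable_of_hasCompactSupport hFs)
    (integrable_sq_of_hasCompactSupport hF.continuous hFs)
    (integrable_mul_log_of_hasCompactSupport (hF.continuous.pow 2) (hasCompactSupport_sq hFs))
    fun b hb => by
      simpa only [sum_sq_fderiv_comp_toLp (hf.differentiable one_ne_zero), prod_gaussMass hA hb]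
        using ent_pi_monMeas_sq_le hA hb hF hFs
  simpa only [integral_pi_monMeas hA, WithLp.toLp_ofLp, monPi] using hnash
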